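/- arXiv:1510.02033 — 2 statements merged into one kernel-verified Lean document; each statement's English description precedes it below -/
import Mathlib

section
/- Let q₀ : ℝ → ℂ, let c ∈ ℝ and let j ∈ ℕ satisfy the hypotheses: q₀ is (j+1)-times continuously differentiable on (−∞, c) and on (c, ∞); for every m with 0 ≤ m ≤ j+1 the restriction of q₀⁽ᵐ⁾ to each of (−∞, c) and (c, ∞) is integrable; for every m with 0 ≤ m ≤ j the one-sided limits q₀⁽ᵐ⁾(c⁻) and q₀⁽ᵐ⁾(c⁺) exist and q₀⁽ᵐ⁾(x) → 0 as x → ±∞; and q₀⁽ᵐ⁾(c⁻) = q₀⁽ᵐ⁾(c⁺) for every m with 0 ≤ m ≤ j−1. Then, as |k| → ∞ along the real axis, (ik)^{j+1} q̂₀(k) − e^{−ikc}·[q₀⁽ʲ⁾(c)] → 0, where [q₀⁽ʲ⁾(c)] = q₀⁽ʲ⁾(c⁺) − q₀⁽ʲ⁾(c⁻). In particular the leading large-k behavior of q̂₀(k) is e^{−ikc}[q₀⁽ʲ⁾(c)]/(ik)^{j+1}. -/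
open MeasureTheory Complex Set Filter Topology

/-- The oscillating factor `e^{-ikx}` has norm one for real `k` and `x`. -/
lemma norm_exp_neg_I_mul (k x : ℝ) : ‖Complex.exp (-Complex.I * k * x)‖ = 1 := by
  rw [Complex.norm_exp]
  simp

lemma hasDerivAt_exp_neg_I_mul (k x : ℝ) :
    HasDerivAt (fun x : ℝ => Complex.exp (-Complex.I * k * x))
      (-(Complex.I * k) * Complex.exp (-Complex.I * k * x)) x := by
  have h : HasDerivAt (fun x : ℝ => -Complex.I * k * (x : ℂ)) (-Complex.I * k) x := by
    simpa using (Complex.ofRealCLM.hasDerivAt (x := x)).const_mul (-Complex.I * k)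
  convert h.cexp using 1
  ring

lemma continuous_exp_neg_I_mul (k : ℝ) :
    Continuous fun x : ℝ => Complex.exp (-Complex.I * k * x) := by
  fun_prop

lemma MeasureTheory.Integrable.exp_neg_I_mul {μ : Measure ℝ} {f : ℝ → ℂ} (hf : Integrable f μ)
    (k : ℝ) : Integrable (fun x : ℝ => Complex.exp (-Complex.I * k * x) * f x) μ :=
  hf.bdd_mul (c := 1) (continuous_exp_neg_I_mul k).aestronglyMeasurable
    (ae_of_all _ fun x => (norm_exp_neg_I_mul k x).le)

lemma Filter.Tendsto.exp_neg_I_mul_zero {l : Filter ℝ} {f : ℝ → ℂ} (hf : Tendsto f l (𝓝 0))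
    (k : ℝ) : Tendsto (fun x : ℝ => Complex.exp (-Complex.I * k * x) * f x) l (𝓝 0) := by
  rw [tendsto_zero_iff_norm_tendsto_zero] at hf ⊢
  simpa only [norm_mul, norm_exp_neg_I_mul, one_mul] using hf

/-- Riemann–Lebesgue lemma in the normalization `∫ e^{-ikx} f(x) dx`. -/
lemma tendsto_integral_exp_neg_I_mul_cocompact (f : ℝ → ℂ) :
    Tendsto (fun k : ℝ => ∫ x : ℝ, Complex.exp (-Complex.I * k * x) * f x)
      (cocompact ℝ) (𝓝 0) := by
  have h := (Real.tendsto_integral_exp_smul_cocompact f).comp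
    (tendsto_cocompact_mul_left₀ (K := ℝ) (a := (2 * Real.pi)⁻¹) (by positivity))
  refine h.congr fun k => integral_congr_ae (ae_of_all _ fun x => ?_)
  have hpi : (Real.pi : ℂ) ≠ 0 := by exact_mod_cast Real.pi_ne_zero
  simp only [Circle.smul_def, Real.fourierChar_apply, smul_eq_mul]
  congr 2
  push_cast
  field_simp

/-- Integration by parts for the Fourier integral of a function with a jump at `c`. -/
lemma I_mul_integral_exp_neg_I_mul {f f' : ℝ → ℂ} {c : ℝ} {a b : ℂ}
    (hderiv : ∀ x ∈ Iio c ∪ Ioi c, HasDerivAt f (f' x) x)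
    (hf : Integrable f) (hf' : Integrable f')
    (hleft : Tendsto f (𝓝[<] c) (𝓝 a)) (hright : Tendsto f (𝓝[>] c) (𝓝 b))
    (htop : Tendsto f atTop (𝓝 0)) (hbot : Tendsto f atBot (𝓝 0)) (k : ℝ) :
    Complex.I * k * ∫ x : ℝ, Complex.exp (-Complex.I * k * x) * f x =
      (∫ x : ℝ, Complex.exp (-Complex.I * k * x) * f' x)
        + Complex.exp (-Complex.I * k * c) * (b - a) := by
  have hi := hf.exp_neg_I_mul k
  have hi' := hf'.exp_neg_I_mul k
  have hu := hasDerivAt_exp_neg_I_mul k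
  have hiu : Integrable
      fun x : ℝ => -(Complex.I * k) * Complex.exp (-Complex.I * k * x) * f x := by
    simpa only [mul_assoc] using hi.const_mul (-(Complex.I * k))
  have hexp (s : Set ℝ) : Tendsto (fun x : ℝ => Complex.exp (-Complex.I * k * x)) (𝓝[s] c)
      (𝓝 (Complex.exp (-Complex.I * k * c))) :=
    (continuous_exp_neg_I_mul k).continuousAt.continuousWithinAt
  have hIoi := integral_Ioi_mul_deriv_eq_deriv_mul (fun x _ => hu x)
    (fun x hx => hderiv x (Or.inr hx)) hi'.integrableOn hiu.integrableOn
    ((hexp _).mul hright) (htop.exp_neg_I_mul_zero k)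
  have hIic := integral_Iic_mul_deriv_eq_deriv_mul (fun x _ => hu x)
    (fun x hx => hderiv x (Or.inl hx)) hi'.integrableOn hiu.integrableOn
    ((hexp _).mul hleft) (hbot.exp_neg_I_mul_zero k)
  simp only [mul_assoc (-(Complex.I * (k : ℂ))), integral_const_mul] at hIoi hIic
  rw [← intervalIntegral.integral_Iic_add_Ioi (b := c) hi.integrableOn hi.integrableOn,
    ← intervalIntegral.integral_Iic_add_Ioi (b := c) hi'.integrableOn hi'.integrableOn,
    hIoi, hIic]
  ring

/-- Leading large-`k` behavior of the Fourier transform of a function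
whose `j`-th derivative has a jump discontinuity at `x = c`:
`(ik)^{j+1} q̂₀(k) − e^{−ikc}·[q₀⁽ʲ⁾(c)] → 0` as `|k| → ∞` along the real axis.
Here `d m` denotes the `m`-th derivative of `q₀` (with `d 0 = q₀`), `Lm m` and `Lp m`
denote the one-sided limits `q₀⁽ᵐ⁾(c⁻)` and `q₀⁽ᵐ⁾(c⁺)` respectively. -/
theorem fourier_transform_jump_asymptotics
    (q₀ : ℝ → ℂ) (c : ℝ) (j : ℕ)
    (d : ℕ → ℝ → ℂ) (Lm Lp : ℕ → ℂ)
    (hd0 : d 0 = q₀)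
    -- q₀ is (j+1)-times differentiable on (−∞,c) and (c,∞),
    -- with m-th derivative d m:
    (hderiv : ∀ m ≤ j, ∀ x ∈ Iio c ∪ Ioi c, HasDerivAt (d m) (d (m + 1) x) x)
    -- all derivatives up to order j+1 are continuous on (−∞,c) and (c,∞):
    (hcont : ∀ m ≤ j + 1, ContinuousOn (d m) (Iio c) ∧ ContinuousOn (d m) (Ioi c))
    -- all derivatives up to order j+1 are integrable on (−∞,c) and (c,∞):
    (hint : ∀ m ≤ j + 1, IntegrableOn (d m) (Iio c) ∧ IntegrableOn (d m) (Ioi c))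
    -- one-sided limits at c exist for derivatives up to order j:
    (hlimL : ∀ m ≤ j, Tendsto (d m) (nhdsWithin c (Iio c)) (nhds (Lm m)))
    (hlimR : ∀ m ≤ j, Tendsto (d m) (nhdsWithin c (Ioi c)) (nhds (Lp m)))
    -- derivatives up to order j vanish at ±∞:
    (hdecay : ∀ m ≤ j, Tendsto (d m) atTop (nhds 0) ∧ Tendsto (d m) atBot (nhds 0))
    -- continuity across c of the derivatives of order ≤ j−1:
    (hmatch : ∀ m, m + 1 ≤ j → Lm m = Lp m) :
    Tendsto
      (fun k : ℝ =>
        (Complex.I * k) ^ (j + 1) * (∫ x : ℝ, Complex.exp (-Complex.I * k * x) * q₀ x)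
          - Complex.exp (-Complex.I * k * c) * (Lp j - Lm j))
      (Filter.cocompact ℝ) (nhds 0) := by
  have hintegrable (m : ℕ) (hm : m ≤ j + 1) : Integrable (d m) := by
    rw [← integrableOn_univ, ← Iic_union_Ioi (a := c)]
    exact ((integrableOn_Iic_iff_integrableOn_Iio (by simp)).mpr (hint m hm).1).union (hint m hm).2
  have hparts (m : ℕ) (hm : m ≤ j) (k : ℝ) :=
    I_mul_integral_exp_neg_I_mul (hderiv m hm) (hintegrable m (by lia))
      (hintegrable (m + 1) (by lia)) (hlimL m hm) (hlimR m hm) (hdecay m hm).1 (hdecay m hm).2 k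
  have hpow (k : ℝ) (m : ℕ) (hm : m ≤ j) :
      (Complex.I * k) ^ m * (∫ x : ℝ, Complex.exp (-Complex.I * k * x) * q₀ x) =
        ∫ x : ℝ, Complex.exp (-Complex.I * k * x) * d m x := by
    induction m with
    | zero => simp [hd0]
    | succ m ih =>
      rw [pow_succ', mul_assoc, ih (by lia), hparts m (by lia), hmatch m hm, sub_self, mul_zero,
        add_zero]
  refine (tendsto_integral_exp_neg_I_mul_cocompact (d (j + 1))).congr fun k => ?_
  rw [pow_succ', mul_assoc, hpow k j le_rfl, hparts j le_rfl, add_sub_cancel_right]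
end

section
/- Let T > 0, let g₀ : [0,T] → ℂ be continuous and of bounded variation on [0,T], let t satisfy 0 < t ≤ T, and define g̃₀(s) = ∫_0^t e^{−isτ} g₀(τ) dτ for s ∈ ℝ. Parametrize the boundary ∂D⁺ of the region D⁺ = {k ∈ ℂ : Im(k²) ≥ 0, Im(k) > 0} (for the dispersion relation ω(k) = k² of the linear Schrödinger equation) by its two rays, the positive imaginary axis traversed inward and the positive real axis traversed outward. Then the boundary-term integral in the unified transform method solution formula evaluates at x = 0 as lim_{R→∞} (1/2π) [ ∫_0^R e^{ir²t}·2r·g̃₀(r²) dr + ∫_0^R e^{−ir²t}·2r·g̃₀(−r²) dr ] = g₀(t)/2. Equivalently, −(1/2π)∫_{∂D⁺} e^{−ik²t}·2k·g̃₀(−k²) dk, interpreted as the above principal-value limit after the substitution s = −k² on each ray, equals half the boundary datum g₀(t)/2. -/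
open MeasureTheory Complex Set Filter Topology

theorem integral_exp_neg_mul_mul_sin (s x : ℝ) :
    ∫ u in (0 : ℝ)..x, Real.exp (-u * s) * Real.sin u =
      (1 - Real.exp (-x * s) * (Real.cos x + s * Real.sin x)) * (1 + s ^ 2)⁻¹ := by
  have hs : 1 + s ^ 2 ≠ 0 := by positivity
  have hderiv : ∀ u ∈ uIcc 0 x, HasDerivAt
      (fun u : ℝ => -(Real.exp (-u * s) * (Real.cos u + s * Real.sin u)) * (1 + s ^ 2)⁻¹)
      (Real.exp (-u * s) * Real.sin u) u := by
    intro u _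
    have hexp : HasDerivAt (fun u : ℝ => Real.exp (-u * s)) (Real.exp (-u * s) * (-1 * s)) u :=
      ((hasDerivAt_neg u).mul_const s).exp
    have htrig := (Real.hasDerivAt_cos u).add ((Real.hasDerivAt_sin u).const_mul s)
    refine ((hexp.mul htrig).neg.mul_const (1 + s ^ 2)⁻¹).congr_deriv ?_
    simp only [Pi.add_apply]
    field_simp
    ring
  rw [intervalIntegral.integral_eq_sub_of_hasDerivAt hderiv
    (Continuous.intervalIntegrable (by fun_prop) _ _)]
  simp
  ring

theorem integrable_exp_neg_mul_mul_sin (x : ℝ) :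
    Integrable (Function.uncurry fun u s : ℝ => Real.exp (-u * s) * Real.sin u)
      ((volume.restrict (Ioc 0 x)).prod (volume.restrict (Ioi 0))) := by
  have hmeas : AEStronglyMeasurable
      (Function.uncurry fun u s : ℝ => Real.exp (-u * s) * Real.sin u)
      ((volume.restrict (Ioc 0 x)).prod (volume.restrict (Ioi 0))) :=
    Continuous.aestronglyMeasurable (by fun_prop)
  refine (integrable_prod_iff hmeas).2 ⟨?_, ?_⟩
  · filter_upwards [ae_restrict_mem measurableSet_Ioc] with u hu
    exact (integrableOn_exp_mul_Ioi (neg_lt_zero.2 hu.1) 0).mul_const (Real.sin u)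
  · refine Integrable.congr (f := fun u => |Real.sinc u|) ?_ ?_
    · exact (Real.continuous_sinc.abs.integrableOn_Icc (a := 0) (b := x)).mono_set
        Ioc_subset_Icc_self
    · filter_upwards [ae_restrict_mem measurableSet_Ioc] with u hu
      simp only [Function.uncurry, norm_mul, Real.norm_eq_abs, Real.abs_exp]
      rw [integral_mul_const, integral_exp_mul_Ioi (neg_lt_zero.2 hu.1),
        Real.sinc_of_ne_zero hu.1.ne', abs_div, abs_of_pos hu.1]
      simp
      ring

theorem integral_sinc_eq_integral_Ioi {x : ℝ} (hx : 0 ≤ x) :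
    ∫ u in (0 : ℝ)..x, Real.sinc u =
      ∫ s in Ioi (0 : ℝ),
        (1 - Real.exp (-x * s) * (Real.cos x + s * Real.sin x)) * (1 + s ^ 2)⁻¹ := by
  simp_rw [← integral_exp_neg_mul_mul_sin, intervalIntegral.integral_of_le hx]
  rw [← integral_integral_swap (integrable_exp_neg_mul_mul_sin x)]
  refine setIntegral_congr_fun measurableSet_Ioc fun u hu => ?_
  rw [integral_mul_const, integral_exp_mul_Ioi (neg_lt_zero.2 hu.1),
    Real.sinc_of_ne_zero hu.1.ne']
  simp
  ring

theorem abs_exp_neg_mul_mul_cos_add_le {x s : ℝ} (hx : 1 ≤ x) (hs : 0 ≤ s) :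
    |Real.exp (-x * s) * (Real.cos x + s * Real.sin x)| ≤ 1 := by
  have htrig : |Real.cos x + s * Real.sin x| ≤ 1 + s := by
    refine (abs_add_le _ _).trans (add_le_add (Real.abs_cos_le_one x) ?_)
    rw [abs_mul, abs_of_nonneg hs]
    exact mul_le_of_le_one_right hs (Real.abs_sin_le_one x)
  have hexp : Real.exp (-x * s) ≤ Real.exp (-s) := Real.exp_le_exp.2 (by nlinarith)
  rw [abs_mul, Real.abs_exp]
  calc Real.exp (-x * s) * |Real.cos x + s * Real.sin x|
      ≤ Real.exp (-s) * Real.exp s := by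
        gcongr
        linarith [Real.add_one_le_exp s]
    _ = 1 := by rw [← Real.exp_add]; simp

/-- The Dirichlet integral. -/
theorem tendsto_integral_sinc_atTop :
    Tendsto (fun x : ℝ => ∫ u in (0 : ℝ)..x, Real.sinc u) atTop (𝓝 (Real.pi / 2)) := by
  have hlim : Tendsto (fun x : ℝ => ∫ s in Ioi (0 : ℝ),
      (1 - Real.exp (-x * s) * (Real.cos x + s * Real.sin x)) * (1 + s ^ 2)⁻¹) atTop
      (𝓝 (∫ s in Ioi (0 : ℝ), (1 + s ^ 2)⁻¹)) := by
    refine tendsto_integral_filter_of_dominated_convergence (fun s => 2 * (1 + s ^ 2)⁻¹) ?_ ?_ ?_ ?_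
    · refine Eventually.of_forall fun x => Measurable.aestronglyMeasurable (by fun_prop)
    · filter_upwards [eventually_ge_atTop 1] with x hx
      filter_upwards [ae_restrict_mem measurableSet_Ioi] with s hs
      have habs := abs_le.1 (abs_exp_neg_mul_mul_cos_add_le hx (mem_Ioi.1 hs).le)
      rw [norm_mul, Real.norm_of_nonneg (by positivity : 0 ≤ (1 + s ^ 2)⁻¹)]
      gcongr
      rw [Real.norm_eq_abs, abs_le]
      constructor <;> linarith
    · exact (integrable_inv_one_add_sq.const_mul 2).integrableOn
    · filter_upwards [ae_restrict_mem measurableSet_Ioi] with s hs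
      have hexp : Tendsto (fun x : ℝ => Real.exp (-x * s)) atTop (𝓝 0) :=
        Real.tendsto_exp_atBot.comp (tendsto_neg_atTop_atBot.atBot_mul_const (mem_Ioi.1 hs))
      have hprod : Tendsto (fun x : ℝ => Real.exp (-x * s) * (Real.cos x + s * Real.sin x))
          atTop (𝓝 0) := by
        refine hexp.zero_mul_isBoundedUnder_le (isBoundedUnder_of ⟨1 + |s|, fun x => ?_⟩)
        refine (abs_add_le _ _).trans (add_le_add (Real.abs_cos_le_one x) ?_)
        rw [abs_mul]
        exact mul_le_of_le_one_right (abs_nonneg s) (Real.abs_sin_le_one x)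
      simpa using (hprod.const_sub 1).mul_const (1 + s ^ 2)⁻¹
  rw [integral_Ioi_inv_one_add_sq, Real.arctan_zero, sub_zero] at hlim
  refine hlim.congr' ?_
  filter_upwards [eventually_ge_atTop 0] with x hx
  exact (integral_sinc_eq_integral_Ioi hx).symm

theorem continuous_integral_sinc : Continuous fun x : ℝ => ∫ u in (0 : ℝ)..x, Real.sinc u :=
  intervalIntegral.continuous_primitive
    (fun a b => Real.continuous_sinc.intervalIntegrable a b) 0

theorem exists_abs_integral_sinc_le :
    ∃ C, ∀ x : ℝ, 0 ≤ x → |∫ u in (0 : ℝ)..x, Real.sinc u| ≤ C := by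
  obtain ⟨N, hN⟩ := eventually_atTop.1
    ((tendsto_integral_sinc_atTop.abs).eventually_le_const (lt_add_one _))
  obtain ⟨C, hC⟩ := (isCompact_Icc (a := (0 : ℝ)) (b := N)).exists_bound_of_continuousOn
    continuous_integral_sinc.continuousOn
  refine ⟨max C (|Real.pi / 2| + 1), fun x hx => ?_⟩
  rcases le_total x N with h | h
  · exact (hC x ⟨hx, h⟩).trans (le_max_left _ _)
  · exact (hN x h).trans (le_max_right _ _)

/-- Integration by parts for a Stieltjes function against a continuous density. -/
theorem StieltjesFunction.integral_mul_eq_sub (f : StieltjesFunction ℝ) {k : ℝ → ℝ}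
    (hk : Continuous k) {a : ℝ} (ha : 0 ≤ a) :
    ∫ u in (0 : ℝ)..a, f u * k u =
      f a * (∫ u in (0 : ℝ)..a, k u) - ∫ v in Ioc 0 a, (∫ u in (0 : ℝ)..v, k u) ∂f.measure := by
  have hfin : IsFiniteMeasure (f.measure.restrict (Ioc 0 a)) :=
    ⟨by simp [f.measure_Ioc]⟩
  set F : ℝ → ℝ → ℝ := fun u v => (Iio v).indicator k u with hF
  have hintegrable : Integrable (Function.uncurry F)
      ((volume.restrict (Ioc 0 a)).prod (f.measure.restrict (Ioc 0 a))) := by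
    have hkint : Integrable k (volume.restrict (Ioc 0 a)) :=
      (hk.integrableOn_Icc (a := 0) (b := a)).mono_set Ioc_subset_Icc_self
    have hind : Function.uncurry F = {p : ℝ × ℝ | p.1 < p.2}.indicator fun p => k p.1 := by
      ext ⟨u, v⟩
      simp [hF, indicator]
    rw [hind]
    exact (hkint.comp_fst _).indicator (measurableSet_lt measurable_fst measurable_snd)
  have hinner : ∀ u ∈ Ioc 0 a, ∫ v in Ioc 0 a, F u v ∂f.measure = (f a - f u) * k u := by
    intro u hu
    have hFu : F u = (Ioi u).indicator fun _ => k u := by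
      ext v
      simp [hF, indicator]
    rw [hFu, setIntegral_indicator _root_.measurableSet_Ioi, setIntegral_const, Ioc_inter_Ioi,
      max_eq_right hu.1.le, measureReal_def, f.measure_Ioc,
      ENNReal.toReal_ofReal (sub_nonneg.2 (f.mono hu.2)), smul_eq_mul]
  have houter : ∀ v ∈ Ioc 0 a, ∫ u in Ioc 0 a, F u v = ∫ u in (0 : ℝ)..v, k u := by
    intro v hv
    rw [setIntegral_indicator measurableSet_Iio, intervalIntegral.integral_of_le hv.1.le,
      integral_Ioc_eq_integral_Ioo]
    congr 2
    ext u
    simp only [mem_inter_iff, mem_Ioc, mem_Iio, mem_Ioo]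
    constructor
    · exact fun h => ⟨h.1.1, h.2⟩
    · exact fun h => ⟨⟨h.1, h.2.le.trans hv.2⟩, h.2⟩
  have hswap := integral_integral_swap hintegrable
  rw [setIntegral_congr_fun measurableSet_Ioc hinner,
    setIntegral_congr_fun measurableSet_Ioc houter, ← intervalIntegral.integral_of_le ha] at hswap
  rw [← hswap, ← intervalIntegral.integral_const_mul, ← intervalIntegral.integral_sub]
  · simp only [sub_mul, sub_sub_cancel]
  · exact (hk.intervalIntegrable _ _).const_mul _
  · exact (((intervalIntegrable_const (c := f a)).sub f.mono.intervalIntegrable).mul_continuousOn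
      hk.continuousOn)

theorem integral_mul_sinc_mul (S v : ℝ) :
    ∫ u in (0 : ℝ)..v, S * Real.sinc (S * u) = ∫ u in (0 : ℝ)..(S * v), Real.sinc u := by
  rw [intervalIntegral.integral_const_mul, intervalIntegral.mul_integral_comp_mul_left]
  simp

theorem StieltjesFunction.tendsto_integral_mul_sinc (f : StieltjesFunction ℝ) {a : ℝ}
    (ha : 0 < a) :
    Tendsto (fun S : ℝ => ∫ u in (0 : ℝ)..a, f u * (S * Real.sinc (S * u))) atTop
      (𝓝 (Real.pi / 2 * f 0)) := by
  have hfin : IsFiniteMeasure (f.measure.restrict (Ioc 0 a)) :=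
    ⟨by simp [f.measure_Ioc]⟩
  obtain ⟨C, hC⟩ := exists_abs_integral_sinc_le
  have hscale : ∀ v : ℝ, 0 < v → Tendsto (fun S : ℝ => ∫ u in (0 : ℝ)..(S * v), Real.sinc u)
      atTop (𝓝 (Real.pi / 2)) := fun v hv =>
    tendsto_integral_sinc_atTop.comp (tendsto_id.atTop_mul_const hv)
  have hdom : Tendsto (fun S : ℝ => ∫ v in Ioc 0 a, (∫ u in (0 : ℝ)..(S * v), Real.sinc u)
      ∂f.measure) atTop (𝓝 (∫ v in Ioc 0 a, Real.pi / 2 ∂f.measure)) := by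
    refine tendsto_integral_filter_of_dominated_convergence (fun _ => C) ?_ ?_ ?_ ?_
    · exact Eventually.of_forall fun S =>
        (continuous_integral_sinc.comp (continuous_const_mul S)).aestronglyMeasurable
    · filter_upwards [eventually_ge_atTop 0] with S hS
      filter_upwards [ae_restrict_mem measurableSet_Ioc] with v hv
      exact hC _ (mul_nonneg hS hv.1.le)
    · exact integrable_const C
    · filter_upwards [ae_restrict_mem measurableSet_Ioc] with v hv
      exact hscale v hv.1
  rw [setIntegral_const, measureReal_def, f.measure_Ioc,
    ENNReal.toReal_ofReal (sub_nonneg.2 (f.mono ha.le)), smul_eq_mul] at hdom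
  convert ((hscale a ha).const_mul (f a)).sub hdom using 1
  · ext S
    rw [f.integral_mul_eq_sub (k := fun u => S * Real.sinc (S * u))
      (continuous_const.mul (Real.continuous_sinc.comp (continuous_const_mul S))) ha.le]
    simp only [integral_mul_sinc_mul]
  · congr 1
    ring

theorem Monotone.tendsto_integral_mul_sinc {h : ℝ → ℝ} (hh : Monotone h) {a : ℝ} (ha : 0 < a) :
    Tendsto (fun S : ℝ => ∫ u in (0 : ℝ)..a, h u * (S * Real.sinc (S * u))) atTop
      (𝓝 (Real.pi / 2 * Function.rightLim h 0)) := by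
  refine (hh.stieltjesFunction.tendsto_integral_mul_sinc ha).congr fun S => ?_
  refine intervalIntegral.integral_congr_ae ?_
  filter_upwards [hh.countable_not_continuousAt.ae_notMem volume] with u hu _
  have hcont : ContinuousAt h u := not_not.1 hu
  rw [hh.stieltjesFunction_eq, hcont.continuousWithinAt.rightLim_eq]

/-- Jordan's criterion for the one-sided Dirichlet kernel, real-valued case. -/
theorem BoundedVariationOn.tendsto_integral_mul_sinc_real {h : ℝ → ℝ} {a : ℝ} (ha : 0 < a)
    (hbv : BoundedVariationOn h (Icc 0 a)) (hcont : ContinuousOn h (Icc 0 a)) :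
    Tendsto (fun S : ℝ => ∫ u in (0 : ℝ)..a, h u * (S * Real.sinc (S * u))) atTop
      (𝓝 (Real.pi / 2 * h 0)) := by
  obtain ⟨p, q, hp, hq, hpq⟩ :=
    hbv.locallyBoundedVariationOn.exists_monotoneOn_sub_monotoneOn
  have hextend : ∀ {r : ℝ → ℝ}, MonotoneOn r (Icc 0 a) →
      ∃ r' : ℝ → ℝ, Monotone r' ∧ EqOn r r' (Icc 0 a) := fun hr =>
    hr.exists_monotone_extension
      (hr.map_bddBelow Subset.rfl ⟨0, fun x hx => hx.1, left_mem_Icc.2 ha.le⟩)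
      (hr.map_bddAbove Subset.rfl ⟨a, fun x hx => hx.2, right_mem_Icc.2 ha.le⟩)
  obtain ⟨p', hp', hpp'⟩ := hextend hp
  obtain ⟨q', hq', hqq'⟩ := hextend hq
  have heq : ∀ u ∈ Icc 0 a, h u = p' u - q' u := by
    intro u hu
    rw [hpq, Pi.sub_apply, hpp' hu, hqq' hu]
  have hlim : h 0 = Function.rightLim p' 0 - Function.rightLim q' 0 := by
    have hIoo : Ioo 0 a ∈ 𝓝[>] (0 : ℝ) := Ioo_mem_nhdsGT ha
    have hleft : Tendsto h (𝓝[>] 0) (𝓝 (h 0)) :=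
      (hcont 0 (left_mem_Icc.2 ha.le)).mono_left
        (nhdsWithin_le_of_mem (mem_of_superset hIoo Ioo_subset_Icc_self))
    refine tendsto_nhds_unique hleft
      (((hp'.tendsto_rightLim 0).sub (hq'.tendsto_rightLim 0)).congr' ?_)
    filter_upwards [hIoo] with u hu
    exact (heq u (Ioo_subset_Icc_self hu)).symm
  rw [hlim, mul_sub]
  refine ((hp'.tendsto_integral_mul_sinc ha).sub (hq'.tendsto_integral_mul_sinc ha)).congr
    fun S => ?_
  have hk : Continuous fun u : ℝ => S * Real.sinc (S * u) :=
    continuous_const.mul (Real.continuous_sinc.comp (continuous_const_mul S))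
  rw [← intervalIntegral.integral_sub (hp'.intervalIntegrable.mul_continuousOn hk.continuousOn)
    (hq'.intervalIntegrable.mul_continuousOn hk.continuousOn)]
  refine intervalIntegral.integral_congr fun u hu => ?_
  rw [uIcc_of_le ha.le] at hu
  simp only [heq u hu, sub_mul]

/-- Jordan's criterion for the one-sided Dirichlet kernel. -/
theorem BoundedVariationOn.tendsto_integral_mul_sinc {h : ℝ → ℂ} {a : ℝ} (ha : 0 < a)
    (hbv : BoundedVariationOn h (Icc 0 a)) (hcont : ContinuousOn h (Icc 0 a)) :
    Tendsto (fun S : ℝ => ∫ u in (0 : ℝ)..a, h u * ((S * Real.sinc (S * u) : ℝ) : ℂ)) atTop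
      (𝓝 (Real.pi / 2 * h 0)) := by
  have hre := BoundedVariationOn.tendsto_integral_mul_sinc_real (h := fun u => (h u).re) ha
    (reCLM.lipschitz.comp_boundedVariationOn hbv) (continuous_re.comp_continuousOn hcont)
  have him := BoundedVariationOn.tendsto_integral_mul_sinc_real (h := fun u => (h u).im) ha
    (imCLM.lipschitz.comp_boundedVariationOn hbv) (continuous_im.comp_continuousOn hcont)
  have hsum := ((continuous_ofReal.tendsto _).comp hre).add
    (((continuous_ofReal.tendsto _).comp him).mul_const I)
  convert hsum using 1
  · ext S
    have hk : Continuous fun u : ℝ => S * Real.sinc (S * u) :=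
      continuous_const.mul (Real.continuous_sinc.comp (continuous_const_mul S))
    have hintegrable : ∀ φ : ℂ → ℝ, Continuous φ → IntervalIntegrable
        (fun u => ((φ (h u) * (S * Real.sinc (S * u)) : ℝ) : ℂ)) volume 0 a := by
      intro φ hφ
      refine ContinuousOn.intervalIntegrable ?_
      rw [uIcc_of_le ha.le]
      exact continuous_ofReal.comp_continuousOn
        ((hφ.comp_continuousOn hcont).mul hk.continuousOn)
    simp only [Function.comp_apply, ← intervalIntegral.integral_ofReal]
    rw [← intervalIntegral.integral_mul_const,
      ← intervalIntegral.integral_add (hintegrable re continuous_re)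
        ((hintegrable im continuous_im).mul_const I)]
    refine intervalIntegral.integral_congr fun u _ => ?_
    nth_rewrite 1 [← re_add_im (h u)]
    push_cast
    ring
  · congr 1
    nth_rewrite 1 [← re_add_im (h 0)]
    push_cast
    ring

theorem integral_exp_sq_add_integral_exp_neg_sq (R u : ℝ) :
    (∫ r in (0 : ℝ)..R, Complex.exp (I * r ^ 2 * u) * (2 * r)) +
      ∫ r in (0 : ℝ)..R, Complex.exp (-I * r ^ 2 * u) * (2 * r) =
    2 * ((R ^ 2 * Real.sinc (R ^ 2 * u) : ℝ) : ℂ) := by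
  have hreal : ∫ r in (0 : ℝ)..R, 4 * r * Real.cos (r ^ 2 * u) =
      2 * (R ^ 2 * Real.sinc (R ^ 2 * u)) := by
    rcases eq_or_ne u 0 with rfl | hu
    · simp only [mul_zero, Real.cos_zero, mul_one, Real.sinc_zero]
      rw [intervalIntegral.integral_const_mul, integral_id]
      ring
    · have hderiv : ∀ r ∈ uIcc 0 R, HasDerivAt (fun r : ℝ => 2 * Real.sin (r ^ 2 * u) / u)
          (4 * r * Real.cos (r ^ 2 * u)) r := by
        intro r _
        refine (((((hasDerivAt_pow 2 r).mul_const u).sin).const_mul 2).div_const u).congr_deriv ?_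
        field_simp
        push_cast
        ring
      rw [intervalIntegral.integral_eq_sub_of_hasDerivAt hderiv
        (Continuous.intervalIntegrable (by fun_prop) _ _)]
      rcases eq_or_ne R 0 with rfl | hR
      · simp
      · rw [Real.sinc_of_ne_zero (by positivity)]
        simp
        field_simp
  rw [← intervalIntegral.integral_add (Continuous.intervalIntegrable (by fun_prop) _ _)
    (Continuous.intervalIntegrable (by fun_prop) _ _)]
  rw [← ofReal_ofNat 2, ← ofReal_mul, ← hreal, ← intervalIntegral.integral_ofReal]
  refine intervalIntegral.integral_congr fun r _ => ?_
  have hcos := two_cos ((r : ℂ) ^ 2 * u)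
  push_cast
  rw [show I * (r : ℂ) ^ 2 * u = (r ^ 2 * u) * I by ring,
    show -I * (r : ℂ) ^ 2 * u = -(r ^ 2 * u) * I by ring, ← add_mul, ← hcos]
  ring

theorem integral_exp_sq_mul_transform {G : ℝ → ℂ} (hG : Continuous G) (t R : ℝ) (c : ℂ) :
    ∫ r in (0 : ℝ)..R, Complex.exp (c * r ^ 2 * t) * (2 * r) *
        (∫ τ in (0 : ℝ)..t, Complex.exp (-(c * r ^ 2) * τ) * G τ) =
      ∫ u in (0 : ℝ)..t, G (t - u) *
        ∫ r in (0 : ℝ)..R, Complex.exp (c * r ^ 2 * u) * (2 * r) := by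
  have hinner : ∀ r : ℝ, Complex.exp (c * r ^ 2 * t) * (2 * r) *
        (∫ τ in (0 : ℝ)..t, Complex.exp (-(c * r ^ 2) * τ) * G τ) =
      ∫ u in (0 : ℝ)..t, G (t - u) * (Complex.exp (c * r ^ 2 * u) * (2 * r)) := by
    intro r
    rw [← intervalIntegral.integral_const_mul]
    have hreflect := intervalIntegral.integral_comp_sub_left (a := 0) (b := t) (fun τ : ℝ =>
      Complex.exp (c * r ^ 2 * t) * (2 * r) * (Complex.exp (-(c * r ^ 2) * τ) * G τ)) t
    rw [sub_self, sub_zero] at hreflect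
    rw [← hreflect]
    refine intervalIntegral.integral_congr fun u _ => ?_
    have hexp : Complex.exp (c * r ^ 2 * t) * Complex.exp (-(c * r ^ 2) * ((t - u : ℝ) : ℂ)) =
        Complex.exp (c * r ^ 2 * u) := by
      rw [← Complex.exp_add]
      congr 1
      push_cast
      ring
    simp only [← hexp]
    ring
  simp_rw [hinner, ← intervalIntegral.integral_const_mul]
  refine intervalIntegral_intervalIntegral_swap ?_
  have hcont : Continuous (Function.uncurry fun r u : ℝ =>
      G (t - u) * (Complex.exp (c * r ^ 2 * u) * (2 * r))) := by fun_prop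
  exact (hcont.continuousOn.integrableOn_compact (isCompact_uIcc.prod isCompact_uIcc)).mono_set
    (prod_mono uIoc_subset_uIcc uIoc_subset_uIcc)

/-- Evaluation at `x = 0` of the boundary-term integral over `∂D⁺`
(for the linear Schrödinger dispersion relation `ω(k) = k²`, with
`D⁺ = {k : Im(k²) ≥ 0, Im k > 0}`) in the unified transform method solution formula.
Parametrizing the two rays of `∂D⁺` (the positive imaginary axis traversed inward and
the positive real axis traversed outward) and substituting `s = −k²` on each ray, the
principal-value limit of the boundary term equals half the boundary datum, `g₀(t)/2`.
Here `gt` is the time transform of `g₀` truncated at the evaluation time `t`. -/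
theorem UTM_boundary_term_linear_schrodinger
    (T : ℝ) (hT : 0 < T) (g₀ : ℝ → ℂ)
    (hcont : ContinuousOn g₀ (Set.Icc 0 T))
    (hbv : BoundedVariationOn g₀ (Set.Icc 0 T))
    (t : ℝ) (ht0 : 0 < t) (htT : t ≤ T)
    (gt : ℝ → ℂ)
    (hgt : ∀ s : ℝ, gt s = ∫ τ in (0 : ℝ)..t, Complex.exp (-Complex.I * s * τ) * g₀ τ) :
    Tendsto
      (fun R : ℝ =>
        (1 / (2 * Real.pi) : ℂ) *
          ((∫ r in (0 : ℝ)..R, Complex.exp (Complex.I * r ^ 2 * t) * (2 * r) * gt (r ^ 2))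
            + ∫ r in (0 : ℝ)..R,
                Complex.exp (-Complex.I * r ^ 2 * t) * (2 * r) * gt (-(r ^ 2))))
      atTop (nhds (g₀ t / 2)) := by
  set G : ℝ → ℂ := IccExtend hT.le ((Icc 0 T).domRestrict g₀)
  have hG : Continuous G := hcont.domRestrict.Icc_extend'
  have hGeq : ∀ τ ∈ Icc 0 T, G τ = g₀ τ := fun τ hτ => IccExtend_of_mem _ _ hτ
  have hgtG : ∀ s : ℝ, gt s = ∫ τ in (0 : ℝ)..t, Complex.exp (-(I * s) * τ) * G τ := by
    intro s
    rw [hgt]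
    refine intervalIntegral.integral_congr fun τ hτ => ?_
    rw [uIcc_of_le ht0.le] at hτ
    simp only [hGeq τ ⟨hτ.1, hτ.2.trans htT⟩, neg_mul]
  have hBV : BoundedVariationOn (fun u => G (t - u)) (Icc 0 t) := by
    have hmaps : MapsTo (fun u : ℝ => t - u) (Icc 0 t) (Icc 0 T) := fun u hu =>
      ⟨by linarith [hu.2], by linarith [hu.1]⟩
    have hanti : AntitoneOn (fun u : ℝ => t - u) (Icc 0 t) := fun u _ v _ huv =>
      sub_le_sub_left huv t
    refine ne_top_of_le_ne_top hbv ?_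
    rw [eVariationOn.congr (g := g₀ ∘ fun u => t - u) fun u hu => hGeq _ (hmaps hu)]
    exact eVariationOn.comp_le_of_antitoneOn g₀ _ hanti hmaps
  have hJordan := (BoundedVariationOn.tendsto_integral_mul_sinc ht0 hBV
    (by fun_prop)).comp (tendsto_pow_atTop (α := ℝ) two_ne_zero)
  have hscaled := hJordan.const_mul (1 / Real.pi : ℂ)
  have hpi : (Real.pi : ℂ) ≠ 0 := ofReal_ne_zero.2 Real.pi_ne_zero
  convert hscaled using 1
  · ext R
    have hfst := integral_exp_sq_mul_transform hG t R I
    have hsnd := integral_exp_sq_mul_transform hG t R (-I)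
    have hkernel : ∀ c : ℂ, Continuous fun u : ℝ =>
        ∫ r in (0 : ℝ)..R, Complex.exp (c * r ^ 2 * u) * (2 * r) := fun c =>
      intervalIntegral.continuous_parametric_intervalIntegral_of_continuous'
        (by fun_prop) _ _
    have hintegrable : ∀ c : ℂ, IntervalIntegrable (fun u : ℝ => G (t - u) *
        ∫ r in (0 : ℝ)..R, Complex.exp (c * r ^ 2 * u) * (2 * r)) volume 0 t := fun c =>
      ((hG.comp (continuous_sub_left t)).mul (hkernel c)).intervalIntegrable _ _
    simp only [hgtG, Function.comp_apply]
    push_cast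
    simp only [mul_neg, neg_mul] at hfst hsnd ⊢
    rw [hfst, hsnd]
    have hsum := intervalIntegral.integral_add (hintegrable I) (hintegrable (-I))
    simp only [← mul_add, integral_exp_sq_add_integral_exp_neg_sq] at hsum
    simp only [neg_mul] at hsum
    rw [← hsum]
    simp only [mul_left_comm _ (2 : ℂ), intervalIntegral.integral_const_mul]
    rw [← mul_assoc]
    congr 1
    · field_simp
    · simp only [ofReal_mul, ofReal_pow]
  · rw [sub_zero, hGeq t ⟨ht0.le, htT⟩]
    congr 1
    field_simp
end
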